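/- Let O ⊆ ℝ × ℝ be an open set that is invariant under the unit translation in the second coordinate (p ∈ O implies (p.1, p.2 + 1) ∈ O and (p.1, p.2 − 1) ∈ O) and that contains the line {p : ℝ × ℝ | p.1 = 0}. Then there exists a field T : ℝ × ℝ → Matrix (Fin 2) (Fin 2) ℝ which is smooth (ContDiff ℝ ⊤), satisfies T (p.1, p.2 + 1) = T p for all p, takes symmetric-matrix values at every point, has vanishing coordinate divergence (for every p and every b, fderiv ℝ (fun q => T q 0 b) p (1,0) + fderiv ℝ (fun q => T q 1 b) p (0,1) = 0), has support contained in O (the closure of {p | T p ≠ 0} is contained in O), is nonzero at at least one point, and satisfies the weak energy condition at every point: for every p and every covector ξ : Fin 2 → ℝ with (ξ 0)^2 − (ξ 1)^2 > 0, one has ∑ a, ∑ b, T p a b * ξ a * ξ b ≥ 0. -/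

import Mathlib

attribute [local instance] Matrix.normedAddCommGroup Matrix.normedSpace

/-!
For a constant vector `v` and a function `φ ≥ 0`, the field `φ vᵃ vᵇ` is symmetric and
satisfies `T(ξ, ξ) = φ (v · ξ)² ≥ 0`, and its divergence is `(∂ᵥ φ) vᵇ`. It is therefore conserved
as soon as `φ` is constant along `v`. The weak energy condition does not force `v` to be causal:
taking `v` to be the *spacelike* direction of the circle, `φ` may be a bump function of `t` alone,
and by compactness of the circle every neighborhood of the curve `t = 0` contains the support of
such a bump.
-/

open scoped Topology

theorem eventually_forall_mem_of_periodic {X α : Type*} [TopologicalSpace X] [AddCommGroup α]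
    [LinearOrder α] [IsOrderedAddMonoid α] [Archimedean α] [TopologicalSpace α] [CompactIccSpace α]
    {O : Set (X × α)} (hO : IsOpen O) {c : α} (hc : 0 < c)
    (hper : ∀ t, Function.Periodic (fun x => (t, x) ∈ O) c) {t₀ : X} (ht₀ : ∀ x, (t₀, x) ∈ O) :
    ∀ᶠ t in 𝓝 t₀, ∀ x, (t, x) ∈ O := by
  have near_period : ∀ᶠ t in 𝓝 t₀, ∀ x ∈ Set.Icc 0 c, (t, x) ∈ O :=
    isCompact_Icc.eventually_forall_of_forall_eventually fun x _ => hO.mem_nhds (ht₀ x)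
  filter_upwards [near_period] with t ht x
  obtain ⟨y, hy, hxy⟩ := (hper t).exists_mem_Ico₀ hc x
  exact hxy.mpr (ht y (Set.Ico_subset_Icc_self hy))

/-- The energy-momentum field `Tᵃᵇ = φ vᵃ vᵇ` of a stream with density `φ` and constant velocity
`v`. The vector `v` is not required to be timelike. -/
def streamTensor {E ι : Type*} (φ : E → ℝ) (v : ι → ℝ) (p : E) : Matrix ι ι ℝ :=
  φ p • Matrix.vecMulVec v v

namespace streamTensor

section Algebra

variable {E ι : Type*} (φ : E → ℝ) (v : ι → ℝ)

theorem isSymm (p : E) : (streamTensor φ v p).IsSymm :=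
  Matrix.IsSymm.smul (Matrix.transpose_vecMulVec v v) (φ p)

theorem sum_mul_mul_eq [Fintype ι] (p : E) (ξ : ι → ℝ) :
    ∑ a, ∑ b, streamTensor φ v p a b * ξ a * ξ b = φ p * (v ⬝ᵥ ξ) ^ 2 := by
  rw [dotProduct, sq, Finset.sum_mul_sum]
  simp only [Finset.mul_sum, streamTensor, Matrix.smul_apply, Matrix.vecMulVec_apply, smul_eq_mul]
  exact Finset.sum_congr rfl fun a _ => Finset.sum_congr rfl fun b _ => by ring

variable {v} in
theorem ne_zero_iff (hv : v ≠ 0) {p : E} : streamTensor φ v p ≠ 0 ↔ φ p ≠ 0 := by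
  simp [streamTensor, Matrix.vecMulVec_eq_zero, hv]

end Algebra

section Calculus

variable {E ι : Type*} [NormedAddCommGroup E] [NormedSpace ℝ E] [Fintype ι] {φ : E → ℝ}

theorem contDiff {n : WithTop ℕ∞} (hφ : ContDiff ℝ n φ) (v : ι → ℝ) :
    ContDiff ℝ n (streamTensor φ v) :=
  hφ.smul contDiff_const

theorem sum_fderiv_eq {p : E} (hφ : DifferentiableAt ℝ φ p) (v : ι → ℝ) (e : ι → E) (b : ι) :
    ∑ a, fderiv ℝ (fun q => streamTensor φ v q a b) p (e a) =
      fderiv ℝ φ p (∑ a, v a • e a) * v b := by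
  have component_fderiv (a : ι) :
      fderiv ℝ (fun q => streamTensor φ v q a b) p = (v a * v b) • fderiv ℝ φ p :=
    fderiv_mul_const hφ (v a * v b)
  simp only [component_fderiv, map_sum, map_smul, Finset.sum_mul, smul_eq_mul,
    smul_apply]
  exact Finset.sum_congr rfl fun a _ => by ring

end Calculus

end streamTensor

theorem fderiv_comp_fst {E F G : Type*} [NormedAddCommGroup E] [NormedSpace ℝ E]
    [NormedAddCommGroup F] [NormedSpace ℝ F] [NormedAddCommGroup G] [NormedSpace ℝ G]
    {f : E → G} {p : E × F} (hf : DifferentiableAt ℝ f p.1) :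
    fderiv ℝ (fun q : E × F => f q.1) p =
      (fderiv ℝ f p.1).comp (ContinuousLinearMap.fst ℝ E F) :=
  (hf.hasFDerivAt.comp p hasFDerivAt_fst).fderiv

theorem weak_energy_condition_insufficient_general
    (O : Set (ℝ × ℝ)) (hO : IsOpen O)
    (hinv : ∀ p ∈ O, (p.1, p.2 + 1) ∈ O ∧ (p.1, p.2 - 1) ∈ O)
    (hline : {p : ℝ × ℝ | p.1 = 0} ⊆ O) :
    ∃ T : ℝ × ℝ → Matrix (Fin 2) (Fin 2) ℝ,
      ContDiff ℝ (⊤ : ℕ∞) T ∧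
      (∀ (p : ℝ × ℝ) (s : ℝ), T (p.1, p.2 + s) = T p) ∧
      (∀ p : ℝ × ℝ, (T p).IsSymm) ∧
      (∀ p : ℝ × ℝ, ∀ b : Fin 2,
        fderiv ℝ (fun q => T q 0 b) p (1, 0) + fderiv ℝ (fun q => T q 1 b) p (0, 1) = 0) ∧
      closure {p : ℝ × ℝ | T p ≠ 0} ⊆ O ∧
      (∃ p : ℝ × ℝ, T p ≠ 0) ∧
      (∀ p : ℝ × ℝ, ∀ ξ : Fin 2 → ℝ, ∑ a, ∑ b, T p a b * ξ a * ξ b ≥ 0) := by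
  have hper (t : ℝ) : Function.Periodic (fun x => (t, x) ∈ O) 1 := fun x =>
    propext ⟨fun h => by simpa using (hinv _ h).2, fun h => (hinv _ h).1⟩
  have strip : ∀ᶠ t in 𝓝 (0 : ℝ), ∀ x, (t, x) ∈ O :=
    eventually_forall_mem_of_periodic hO one_pos hper fun _ => hline rfl
  obtain ⟨f, hfO, -, hf, hf01, hf0⟩ := exists_contDiff_tsupport_subset (n := ⊤) strip
  let φ : ℝ × ℝ → ℝ := fun p => f p.1
  let v : Fin 2 → ℝ := ![0, 1]
  have hv : v ≠ 0 := fun h => one_ne_zero (congrFun h 1)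
  have hφ : ContDiff ℝ (⊤ : ℕ∞) φ := hf.comp contDiff_fst
  refine ⟨streamTensor φ v, streamTensor.contDiff hφ v, fun _ _ => rfl, streamTensor.isSymm φ v,
    fun p b => ?conserved, ?support, ⟨0, (streamTensor.ne_zero_iff φ hv).mpr ?nonzero⟩,
    fun p ξ => ?energy⟩
  case conserved =>
    have hdiv := streamTensor.sum_fderiv_eq (hφ.differentiable (by simp) p) v ![(1, 0), (0, 1)] b
    simpa [v, φ, fderiv_comp_fst (hf.differentiable (by simp) p.1)] using hdiv
  case support =>
    simp only [streamTensor.ne_zero_iff φ hv]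
    exact fun p hp => hfO (tsupport_comp_subset_preimage f continuous_fst hp) p.2
  case nonzero => simp [φ, hf0]
  case energy =>
    rw [streamTensor.sum_mul_mul_eq]
    exact mul_nonneg (hf01 ⟨p.1, rfl⟩).1 (sq_nonneg _)

/-- Proposition 1 of the paper in coordinates on the cylinder: in any open,
unit-translation-invariant neighborhood of the closed spacelike curve `t = 0`
there is a smooth, periodic, symmetric, conserved energy-momentum field,
supported in the neighborhood and nonvanishing, satisfying the weak energy
condition for the Minkowski metric `diag(1,-1)`. -/
theorem weak_energy_condition_insufficient
    (O : Set (ℝ × ℝ)) (hO : IsOpen O)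
    (hinv : ∀ p ∈ O, (p.1, p.2 + 1) ∈ O ∧ (p.1, p.2 - 1) ∈ O)
    (hline : {p : ℝ × ℝ | p.1 = 0} ⊆ O) :
    ∃ T : ℝ × ℝ → Matrix (Fin 2) (Fin 2) ℝ,
      ContDiff ℝ (⊤ : ℕ∞) T ∧
      (∀ p : ℝ × ℝ, T (p.1, p.2 + 1) = T p) ∧
      (∀ p : ℝ × ℝ, (T p).IsSymm) ∧
      (∀ p : ℝ × ℝ, ∀ b : Fin 2,
        fderiv ℝ (fun q => T q 0 b) p (1, 0) + fderiv ℝ (fun q => T q 1 b) p (0, 1) = 0) ∧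
      closure {p : ℝ × ℝ | T p ≠ 0} ⊆ O ∧
      (∃ p : ℝ × ℝ, T p ≠ 0) ∧
      (∀ p : ℝ × ℝ, ∀ ξ : Fin 2 → ℝ, (ξ 0) ^ 2 - (ξ 1) ^ 2 > 0 →
        ∑ a, ∑ b, T p a b * ξ a * ξ b ≥ 0) := by
  obtain ⟨T, hT, htrans, hsymm, hdiv, hsupp, hne, hpos⟩ :=
    weak_energy_condition_insufficient_general O hO hinv hline
  exact ⟨T, hT, fun p => htrans p 1, hsymm, hdiv, hsupp, hne, fun p ξ _ => hpos p ξ⟩
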